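/- Let n ≥ 3. For two matrices A, B ∈ Ê_n, let c(A,B) denote the number of defining inequalities of Ê_n that both A and B satisfy exactly, i.e., the number of ordered pairs (i,j), i ≠ j, with A_{ij} = 0 and B_{ij} = 0, plus the number of triples (i,j,k) of pairwise distinct indices with A_{ij} + A_{jk} = A_{ik} and B_{ij} + B_{jk} = B_{ik}. Then for all distinct r, s ∈ Fin n: c(R^(r), R^(s)) = (n−1)²(n−2), c(C^(r), C^(s)) = (n−1)²(n−2), c(R^(r), C^(s)) = (n−1)²(n−2) + 1, and c(R^(r), C^(r)) = n(n−1)(n−2). (Consequently every combinatorial automorphism of Ê_n preserves both the partition of L_n into rows and columns and the partition into the pairs {R^(i), C^(i)}.) -/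

import Mathlib

/-- The line `R^(r)`: all ones on row `r` off the diagonal, zero elsewhere. -/
def lineR (n : ℕ) (r : Fin n) : Fin n → Fin n → ℝ :=
  fun i j => if i = r ∧ j ≠ r then 1 else 0

/-- The line `C^(r)`: all ones on column `r` off the diagonal, zero elsewhere. -/
def lineC (n : ℕ) (r : Fin n) : Fin n → Fin n → ℝ :=
  fun i j => if j = r ∧ i ≠ r then 1 else 0

/-- `c(A,B)`: the number of defining inequalities of `Ê_n` satisfied exactly by both
`A` and `B` (exact nonnegativity inequalities plus exact triangle inequalities). -/
noncomputable def cCount (n : ℕ) (A B : Fin n → Fin n → ℝ) : ℕ :=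
  (Finset.univ.filter fun p : Fin n × Fin n =>
    p.1 ≠ p.2 ∧ A p.1 p.2 = 0 ∧ B p.1 p.2 = 0).card +
  (Finset.univ.filter fun t : Fin n × Fin n × Fin n =>
    t.1 ≠ t.2.1 ∧ t.2.1 ≠ t.2.2 ∧ t.1 ≠ t.2.2 ∧
      A t.1 t.2.1 + A t.2.1 t.2.2 = A t.1 t.2.2 ∧
      B t.1 t.2.1 + B t.2.1 t.2.2 = B t.1 t.2.2).card

/-- Counting ordered pairs by first the coordinate `i ∈ S`, then `j ∈ T i`. -/
lemma card_pairs_aux {n : ℕ} (P : Fin n × Fin n → Prop) [DecidablePred P]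
    (S : Finset (Fin n)) (T : Fin n → Finset (Fin n)) (h : ∀ i j, P (i, j) ↔ i ∈ S ∧ j ∈ T i) :
    (Finset.univ.filter P).card = ∑ i ∈ S, (T i).card := by
  rw [← Finset.card_sigma]
  refine Finset.card_nbij' (fun p => ⟨p.1, p.2⟩) (fun p => (p.1, p.2)) ?_ ?_ ?_ ?_
  · rintro ⟨i, j⟩ hp
    simpa [h] using hp
  · rintro ⟨i, j⟩ hp
    simpa [h] using hp
  · intro p _; rfl
  · intro p _; rfl

lemma card_compl_one {n : ℕ} (a : Fin n) : (({a} : Finset (Fin n))ᶜ).card = n - 1 := by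
  simp [Finset.card_compl]

lemma card_compl_two {n : ℕ} (a b : Fin n) (h : a ≠ b) :
    (({a, b} : Finset (Fin n))ᶜ).card = n - 2 := by
  rw [Finset.card_compl, Finset.card_pair h, Fintype.card_fin]

/-- Triples of distinct indices with middle index in `S`. -/
lemma card_triples_aux {n : ℕ} (P : Fin n × Fin n × Fin n → Prop) [DecidablePred P]
    (S : Finset (Fin n))
    (h : ∀ i j k, P (i, j, k) ↔ i ≠ j ∧ j ≠ k ∧ i ≠ k ∧ j ∈ S) :
    (Finset.univ.filter P).card = S.card * ((n - 1) * (n - 2)) := by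
  have h1 : (Finset.univ.filter P).card =
      (S.sigma fun j => (({j} : Finset (Fin n))ᶜ).sigma fun i =>
        (({i, j} : Finset (Fin n))ᶜ)).card := by
    refine Finset.card_nbij' (fun p => ⟨p.2.1, p.1, p.2.2⟩) (fun p => (p.2.1, p.1, p.2.2))
      ?_ ?_ ?_ ?_
    · rintro ⟨i, j, k⟩ hp
      simp [h] at hp ⊢
      grind
    · rintro ⟨j, i, k⟩ hp
      simp [h] at hp ⊢
      grind
    · intro p _; rfl
    · intro p _; rfl
  rw [h1, Finset.card_sigma]
  rw [Finset.sum_congr rfl (g := fun _ => (n - 1) * (n - 2))]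
  · simp
  · intro j _
    rw [Finset.card_sigma, Finset.sum_congr rfl (g := fun _ => n - 2)]
    · simp [card_compl_one]
    · intro i hi
      exact card_compl_two i j (by simpa using hi)

lemma lineR_zero {n : ℕ} (r i j : Fin n) (h : i ≠ j) : lineR n r i j = 0 ↔ i ≠ r := by
  unfold lineR
  by_cases h1 : i = r <;> by_cases h2 : j = r <;> simp_all

lemma lineC_zero {n : ℕ} (r i j : Fin n) (h : i ≠ j) : lineC n r i j = 0 ↔ j ≠ r := by
  unfold lineC
  by_cases h1 : i = r <;> by_cases h2 : j = r <;> simp_all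

lemma lineR_tri {n : ℕ} (r i j k : Fin n) (h : i ≠ j) (h' : j ≠ k) (h'' : i ≠ k) :
    lineR n r i j + lineR n r j k = lineR n r i k ↔ j ≠ r := by
  unfold lineR
  by_cases h1 : i = r <;> by_cases h2 : j = r <;> by_cases h3 : k = r <;> simp_all

lemma lineC_tri {n : ℕ} (r i j k : Fin n) (h : i ≠ j) (h' : j ≠ k) (h'' : i ≠ k) :
    lineC n r i j + lineC n r j k = lineC n r i k ↔ j ≠ r := by
  unfold lineC
  by_cases h1 : i = r <;> by_cases h2 : j = r <;> by_cases h3 : k = r <;> simp_all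

/-- The number of facets of `Ê_n` containing each pair of lines:
`c(R^(r),R^(s)) = c(C^(r),C^(s)) = (n-1)²(n-2)`,
`c(R^(r),C^(s)) = (n-1)²(n-2) + 1` for `r ≠ s`, and
`c(R^(r),C^(r)) = n(n-1)(n-2)`. -/
theorem stmt19 (n : ℕ) (hn : 3 ≤ n) (r s : Fin n) (hrs : r ≠ s) :
    cCount n (lineR n r) (lineR n s) = (n - 1) ^ 2 * (n - 2) ∧
    cCount n (lineC n r) (lineC n s) = (n - 1) ^ 2 * (n - 2) ∧
    cCount n (lineR n r) (lineC n s) = (n - 1) ^ 2 * (n - 2) + 1 ∧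
    cCount n (lineR n r) (lineC n r) = n * (n - 1) * (n - 2) := by
  have two : ∀ a b : Fin n, a ≠ b → (({a, b} : Finset (Fin n))ᶜ).card = n - 2 := card_compl_two
  have one : ∀ a : Fin n, (({a} : Finset (Fin n))ᶜ).card = n - 1 := card_compl_one
  obtain ⟨m, rfl⟩ : ∃ m, n = m + 3 := ⟨n - 3, by omega⟩
  refine ⟨?_, ?_, ?_, ?_⟩
  · unfold cCount
    rw [card_pairs_aux _ ({r, s}ᶜ) (fun i => {i}ᶜ), card_triples_aux _ ({r, s}ᶜ), two r s hrs]
    · simp only [one, Finset.sum_const, two r s hrs, smul_eq_mul]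
      simp only [show m + 3 - 1 = m + 2 by omega,
        show m + 3 - 2 = m + 1 by omega]
      ring
    · intro i j k
      have := lineR_tri r i j k
      have := lineR_tri s i j k
      simp only [Finset.mem_compl, Finset.mem_insert, Finset.mem_singleton]
      tauto
    · intro i j
      have := lineR_zero r i j
      have := lineR_zero s i j
      simp only [Finset.mem_compl, Finset.mem_insert, Finset.mem_singleton, eq_comm (a := j)]
      tauto
  · unfold cCount
    have hsw : ∀ (P : Fin (m+3) × Fin (m+3) → Prop) [DecidablePred P],
        (Finset.univ.filter P).card =
          (Finset.univ.filter fun p : Fin (m+3) × Fin (m+3) => P p.swap).card := by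
      intro P _
      refine Finset.card_nbij' Prod.swap Prod.swap ?_ ?_ ?_ ?_ <;> intro p <;> simp
    rw [hsw, card_pairs_aux _ ({r, s}ᶜ) (fun i => {i}ᶜ), card_triples_aux _ ({r, s}ᶜ), two r s hrs]
    · simp only [one, Finset.sum_const, two r s hrs, smul_eq_mul]
      simp only [show m + 3 - 1 = m + 2 by omega, show m + 3 - 2 = m + 1 by omega]
      ring
    · intro i j k
      have := lineC_tri r i j k
      have := lineC_tri s i j k
      simp only [Finset.mem_compl, Finset.mem_insert, Finset.mem_singleton]
      tauto
    · intro i j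
      have := lineC_zero r j i
      have := lineC_zero s j i
      simp only [Finset.mem_compl, Finset.mem_insert, Finset.mem_singleton, Prod.swap]
      tauto
  · unfold cCount
    rw [card_pairs_aux _ ({r}ᶜ) (fun i => {i, s}ᶜ), card_triples_aux _ ({r, s}ᶜ), two r s hrs]
    · have hs : s ∈ ({r}ᶜ : Finset (Fin (m + 3))) := by simpa using hrs.symm
      rw [← Finset.add_sum_erase _ _ hs, Finset.sum_congr rfl (g := fun _ => m + 3 - 2)]
      · simp only [Finset.sum_const, smul_eq_mul, Finset.card_erase_of_mem hs, one,
          Finset.pair_eq_singleton]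
        simp only [show m + 3 - 1 = m + 2 by omega, show m + 3 - 2 = m + 1 by omega,
          show m + 2 - 1 = m + 1 by omega]
        ring
      · intro i hi
        exact two i s (Finset.ne_of_mem_erase hi)
    · intro i j k
      have := lineR_tri r i j k
      have := lineC_tri s i j k
      simp only [Finset.mem_compl, Finset.mem_insert, Finset.mem_singleton]
      tauto
    · intro i j
      have := lineR_zero r i j
      have := lineC_zero s i j
      simp only [Finset.mem_compl, Finset.mem_insert, Finset.mem_singleton, eq_comm (a := j) (b := i)]
      tauto
  · unfold cCount
    rw [card_pairs_aux _ ({r}ᶜ) (fun i => {i, r}ᶜ), card_triples_aux _ ({r}ᶜ), one r]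
    · rw [Finset.sum_congr rfl (g := fun _ => m + 3 - 2)]
      · simp only [Finset.sum_const, smul_eq_mul, one]
        simp only [show m + 3 - 1 = m + 2 by omega, show m + 3 - 2 = m + 1 by omega]
        ring
      · intro i hi
        exact two i r (by simpa using hi)
    · intro i j k
      have := lineR_tri r i j k
      have := lineC_tri r i j k
      simp only [Finset.mem_compl, Finset.mem_singleton]
      tauto
    · intro i j
      have := lineR_zero r i j
      have := lineC_zero r i j
      simp only [Finset.mem_compl, Finset.mem_insert, Finset.mem_singleton, eq_comm (a := j) (b := i)]
      tauto
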